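/- On (0,∞)×ℝ the identities ∂ₓφ₀(x,v) = (1/36) φ₋₁(x,v) and ∂ₓφ₁(x,v) = (35/36) φ₀(x,v) hold, where ∂ₓ denotes the partial derivative in the first argument. -/

import Mathlib

/-!
With `z = |v|³/(9x)`, every profile in the statement is a Tricomi function `U(a, b, z)` with
`b = 2/3`: Kummer's transformation gives `U₁ = U(5/6, ·)` and `U₃ = U(11/6, ·)`, while
`U₂ = U(-1/6, ·)` by definition and `U₄ = U(-7/6, ·)` by the three-term recurrence in `a`.
The first-order relations
`(z ∂_z + a) U(a, b, z) = a (a - b + 1) U(a + 1, b, z)` and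
`(z ∂_z + b - a - z) U(a, b, z) = -U(a - 1, b, z)` say that `∂ₓ` maps
`x^{-a} U(a, b, w/x)` to a multiple of `x^{-a-1} U(a + 1, b, w/x)`, and
`x^{a-b} e^{-w/x} U(a, b, w/x)` to `x^{a-b-1} e^{-w/x} U(a - 1, b, w/x)`. The first rule is the
claim for `v < 0`, the second the claim for `v ≥ 0`; on the line `v = 0` the second rule only
involves `U(a, b, 0) = Γ(1 - b) / Γ(a - b + 1)`.
-/

noncomputable section

open MeasureTheory Set Filter
open scoped ENNReal

/-- `U₁(z) = (1/Γ(5/6)) ∫₀^∞ e^{−zξ} ξ^{−1/6} (1+ξ)^{−7/6} dξ`. -/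
def U1 (z : ℝ) : ℝ :=
  (1 / Real.Gamma (5/6)) *
    ∫ ξ in Set.Ioi (0:ℝ), Real.exp (-(z * ξ)) * ξ ^ (-(1:ℝ)/6) * (1 + ξ) ^ (-(7:ℝ)/6)

/-- `U₂(z) = (1/Γ(1/6)) ∫₀^∞ e^{−ξ} ξ^{−5/6} (z+ξ)^{1/6} dξ`. -/
def U2 (z : ℝ) : ℝ :=
  (1 / Real.Gamma (1/6)) *
    ∫ ξ in Set.Ioi (0:ℝ), Real.exp (-ξ) * ξ ^ (-(5:ℝ)/6) * (z + ξ) ^ ((1:ℝ)/6)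

/-- The explicit `1/2`-homogeneous solution `φ₀` of the stationary kinetic Kolmogorov equation
in the half-line with absorbing boundary condition. -/
def phi0 (x v : ℝ) : ℝ :=
  if v < 0 then x ^ ((1:ℝ)/6) * U2 (-(v ^ 3) / (9 * x))
  else (Real.Gamma (7/6) / Real.Gamma (1/6)) * x ^ ((1:ℝ)/6) *
    Real.exp (-(v ^ 3) / (9 * x)) * U1 (v ^ 3 / (9 * x))

/-- The explicit solution `φ₋₁`. -/
def phim1 (x v : ℝ) : ℝ :=
  if v < 0 then x ^ (-(5:ℝ)/6) * U1 (-(v ^ 3) / (9 * x))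
  else (Real.Gamma (1/6) / Real.Gamma (7/6)) * x ^ (-(5:ℝ)/6) *
    Real.exp (-(v ^ 3) / (9 * x)) * U2 (v ^ 3 / (9 * x))

/-- `U₃(z) = (1/Γ(11/6)) ∫₀^∞ e^{−zξ} ξ^{5/6} (1+ξ)^{−13/6} dξ`. -/
def U3 (z : ℝ) : ℝ :=
  (1 / Real.Gamma (11/6)) *
    ∫ ξ in Set.Ioi (0:ℝ), Real.exp (-(z * ξ)) * ξ ^ ((5:ℝ)/6) * (1 + ξ) ^ (-(13:ℝ)/6)

/-- `U₄(z) = (1/36) U₁(z) − (1 − z) U₂(z)`. -/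
def U4 (z : ℝ) : ℝ := (1/36) * U1 z - (1 - z) * U2 z

/-- The explicit `7/2`-homogeneous solution `φ₁`, where `Γ(−5/6) = −(6/5)Γ(1/6)`. -/
def phi1 (x v : ℝ) : ℝ :=
  if v < 0 then -(x ^ ((7:ℝ)/6) * U4 (-(v ^ 3) / (9 * x)))
  else -((Real.Gamma (13/6) / (-(6/5) * Real.Gamma (1/6))) * x ^ ((7:ℝ)/6) *
    Real.exp (-(v ^ 3) / (9 * x)) * U3 (v ^ 3 / (9 * x)))

/-- Integrand of the Laplace-type representation of the Tricomi function `U(a, b, z)`. -/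
def tricomiKernel (a b z t : ℝ) : ℝ :=
  Real.exp (-t) * t ^ (a - b) * (z + t) ^ (-a)

/-- The Tricomi confluent hypergeometric function
`U(a, b, z) = z^{1-b} / Γ(a-b+1) ∫₀^∞ e^{-zs} s^{a-b} (1+s)^{-a} ds`, after the substitution
`t = zs`. This representation is meaningful for `b < a + 1` and `z > 0`, with no sign condition
on `a`, and also at `z = 0` when `b < 1`. -/
def tricomiU (a b z : ℝ) : ℝ :=
  1 / Real.Gamma (a - b + 1) * ∫ t in Ioi (0 : ℝ), tricomiKernel a b z t

/-- The contiguous function `U(a - 1, b, z)`, expressed by the three-term recurrence in the first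
parameter. Unlike the integral for `U(a - 1, b, z)`, it is meaningful for all `b < a + 1`. -/
def tricomiUPred (a b z : ℝ) : ℝ :=
  (2 * a - b + z) * tricomiU a b z - a * (a - b + 1) * tricomiU (a + 1) b z

section Kernel

variable {a b z t : ℝ}

lemma measurable_tricomiKernel (a b z : ℝ) : Measurable (tricomiKernel a b z) := by
  unfold tricomiKernel
  fun_prop

lemma tricomiKernel_nonneg (hz : 0 ≤ z) (ht : 0 < t) : 0 ≤ tricomiKernel a b z t := by
  unfold tricomiKernel
  positivity

lemma tricomiKernel_eq_add (hz : 0 < z) (ht : 0 < t) :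
    tricomiKernel a b z t =
      z * tricomiKernel (a + 1) (b + 1) z t + tricomiKernel (a + 1) b z t := by
  have hzt : (z + t) ^ (-a) = (z + t) ^ (-(a + 1)) * (z + t) := by
    rw [← Real.rpow_add_one (by positivity)]
    ring_nf
  have ht' : t ^ (a + 1 - b) = t ^ (a - b) * t := by
    rw [← Real.rpow_add_one ht.ne']
    ring_nf
  simp only [tricomiKernel, add_sub_add_right_eq_sub, hzt, ht']
  ring

lemma tricomiKernel_le_add {y₁ y y₂ : ℝ} (hy₁ : 0 < y₁) (h₁ : y₁ ≤ y) (h₂ : y ≤ y₂)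
    (ht : 0 < t) :
    tricomiKernel a b y t ≤ tricomiKernel a b y₁ t + tricomiKernel a b y₂ t := by
  have hy₂ : 0 ≤ y₂ := by linarith
  have hpow : (y + t) ^ (-a) ≤ (y₁ + t) ^ (-a) + (y₂ + t) ^ (-a) := by
    rcases le_total 0 (-a) with ha | ha
    · exact le_add_of_nonneg_of_le (by positivity)
        (Real.rpow_le_rpow (by linarith) (by linarith) ha)
    · exact le_add_of_le_of_nonneg
        (Real.rpow_le_rpow_of_nonpos (by linarith) (by linarith) ha) (by positivity)
  unfold tricomiKernel
  rw [← mul_add]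
  gcongr

lemma integrableOn_tricomiKernel_of_nonneg (ha : 0 ≤ a) (hab : b < a + 1) (hz : 0 < z) :
    IntegrableOn (tricomiKernel a b z) (Ioi 0) := by
  have hGamma : IntegrableOn (fun t : ℝ => Real.exp (-t) * t ^ (a - b)) (Ioi 0) := by
    simpa using Real.GammaIntegral_convergent (s := a - b + 1) (by linarith)
  refine Integrable.mono' (hGamma.mul_const (z ^ (-a)))
    (measurable_tricomiKernel a b z).aestronglyMeasurable ?_
  filter_upwards [ae_restrict_mem measurableSet_Ioi] with t (ht : 0 < t)
  rw [Real.norm_of_nonneg (tricomiKernel_nonneg hz.le ht)]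
  exact mul_le_mul_of_nonneg_left
    (Real.rpow_le_rpow_of_nonpos hz (by linarith) (by linarith)) (by positivity)

/-- Splitting the kernel raises `a`, which reduces the claim to `0 ≤ a`. -/
lemma integrableOn_tricomiKernel (hab : b < a + 1) (hz : 0 < z) :
    IntegrableOn (tricomiKernel a b z) (Ioi 0) := by
  obtain ⟨n, hn⟩ := exists_nat_ge (-a)
  induction n generalizing a b with
  | zero =>
    exact integrableOn_tricomiKernel_of_nonneg (by simpa using hn) hab hz
  | succ n ih =>
    have hn' : -(a + 1) ≤ n := by
      push_cast at hn
      linarith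
    have hsplit := ((ih (b := b + 1) (by linarith) hn').const_mul z).add
      (ih (b := b) (by linarith) hn')
    exact IntegrableOn.congr_fun hsplit (fun t ht => (tricomiKernel_eq_add hz ht).symm)
      measurableSet_Ioi

lemma hasDerivAt_tricomiKernel (hzt : z + t ≠ 0) :
    HasDerivAt (fun y => tricomiKernel a b y t) (-a * tricomiKernel (a + 1) (b + 1) z t) z := by
  have hpow := ((hasDerivAt_id' z).add_const t).rpow_const (p := -a) (Or.inl hzt)
  refine (hpow.const_mul (Real.exp (-t) * t ^ (a - b))).congr_deriv ?_
  simp only [tricomiKernel, add_sub_add_right_eq_sub, neg_add']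
  ring

lemma hasDerivAt_tricomiKernel_right (ht : t ≠ 0) (hzt : z + t ≠ 0) :
    HasDerivAt (tricomiKernel a b z)
      ((a - b) * tricomiKernel a (b + 1) z t - a * tricomiKernel (a + 1) (b + 1) z t
        - tricomiKernel a b z t) t := by
  have hexp := (hasDerivAt_neg t).exp
  have hpow := Real.hasDerivAt_rpow_const (p := a - b) (Or.inl ht)
  have hshift := ((hasDerivAt_id' t).const_add z).rpow_const (p := -a) (Or.inl hzt)
  refine ((hexp.mul hpow).mul hshift).congr_deriv ?_
  simp only [tricomiKernel, add_sub_add_right_eq_sub, sub_add_eq_sub_sub a b 1, neg_add',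
    Pi.mul_apply]
  ring

lemma continuousAt_tricomiKernel_zero (hab : b ≤ a) (hz : z ≠ 0) :
    ContinuousAt (tricomiKernel a b z) 0 := by
  have hpow : ContinuousAt (fun t : ℝ => t ^ (a - b)) 0 :=
    Real.continuousAt_rpow_const _ _ (Or.inr (by linarith))
  have hshift : ContinuousAt (fun t : ℝ => (z + t) ^ (-a)) 0 :=
    ContinuousAt.rpow_const (by fun_prop) (Or.inl (by simpa using hz))
  exact (ContinuousAt.mul (by fun_prop) hpow).mul hshift

lemma integral_deriv_tricomiKernel (hab : b < a) (hz : 0 < z) :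
    ∫ t in Ioi (0 : ℝ), ((a - b) * tricomiKernel a (b + 1) z t
      - a * tricomiKernel (a + 1) (b + 1) z t - tricomiKernel a b z t) = 0 := by
  have hint := integrableOn_tricomiKernel (a := a) (b := b) (by linarith) hz
  have hint' := (((integrableOn_tricomiKernel (a := a) (b := b + 1) (by linarith) hz).const_mul
    (a - b)).sub ((integrableOn_tricomiKernel (a := a + 1) (b := b + 1) (by linarith)
      hz).const_mul a)).sub hint
  have hderiv : ∀ t ∈ Ioi (0 : ℝ), HasDerivAt (tricomiKernel a b z)
      ((a - b) * tricomiKernel a (b + 1) z t - a * tricomiKernel (a + 1) (b + 1) z t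
        - tricomiKernel a b z t) t :=
    fun t (ht : 0 < t) => hasDerivAt_tricomiKernel_right ht.ne' (by positivity)
  have hzero : tricomiKernel a b z 0 = 0 := by
    simp [tricomiKernel, Real.zero_rpow (sub_pos.mpr hab).ne']
  rw [integral_Ioi_of_hasDerivAt_of_tendsto
    (continuousAt_tricomiKernel_zero hab.le hz.ne').continuousWithinAt hderiv hint'
    (tendsto_zero_of_hasDerivAt_of_integrableOn_Ioi hderiv hint' hint), hzero, sub_zero]

end Kernel

section Contiguity

variable {a b z : ℝ}

lemma tricomiU_eq_add (hab : b < a + 1) (hz : 0 < z) :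
    tricomiU a b z =
      z * tricomiU (a + 1) (b + 1) z + (a - b + 1) * tricomiU (a + 1) b z := by
  have hΓ : Real.Gamma (a + 1 - b + 1) = (a - b + 1) * Real.Gamma (a - b + 1) := by
    rw [← Real.Gamma_add_one (by linarith)]
    ring_nf
  have hne : a - b + 1 ≠ 0 := by linarith
  have hsplit : ∫ t in Ioi (0 : ℝ), tricomiKernel a b z t =
      z * (∫ t in Ioi (0 : ℝ), tricomiKernel (a + 1) (b + 1) z t) +
        ∫ t in Ioi (0 : ℝ), tricomiKernel (a + 1) b z t := by
    rw [← integral_const_mul, ← integral_add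
      ((integrableOn_tricomiKernel (by linarith) hz).const_mul z)
      (integrableOn_tricomiKernel (by linarith) hz)]
    exact setIntegral_congr_fun measurableSet_Ioi fun t ht => tricomiKernel_eq_add hz ht
  simp only [tricomiU, hsplit, hΓ, add_sub_add_right_eq_sub]
  field_simp

lemma tricomiU_eq_sub (hab : b < a) (hz : 0 < z) :
    tricomiU a b z = tricomiU a (b + 1) z - a * tricomiU (a + 1) (b + 1) z := by
  have hΓ : Real.Gamma (a - b + 1) = (a - b) * Real.Gamma (a - b) :=
    Real.Gamma_add_one (by linarith)
  have hne : a - b ≠ 0 := by linarith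
  have hparts := integral_deriv_tricomiKernel hab hz
  have hint₁ := (integrableOn_tricomiKernel (a := a) (b := b + 1) (by linarith) hz).const_mul
    (a - b)
  have hint₂ := (integrableOn_tricomiKernel (a := a + 1) (b := b + 1) (by linarith) hz).const_mul
    a
  rw [integral_sub (by exact hint₁.sub hint₂) (integrableOn_tricomiKernel (by linarith) hz),
    integral_sub hint₁ hint₂, integral_const_mul, integral_const_mul, sub_eq_zero] at hparts
  simp only [tricomiU, ← hparts, hΓ, add_sub_add_right_eq_sub,
    sub_add_eq_sub_sub a b 1, sub_add_cancel]
  field_simp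

lemma hasDerivAt_tricomiU (hab : b < a + 1) (hz : 0 < z) :
    HasDerivAt (tricomiU a b) (-a * tricomiU (a + 1) (b + 1) z) z := by
  have hint : ∀ y, 0 < y → IntegrableOn (tricomiKernel (a + 1) (b + 1) y) (Ioi 0) :=
    fun y hy => integrableOn_tricomiKernel (by linarith) hy
  have hderiv := hasDerivAt_integral_of_dominated_loc_of_deriv_le
    (μ := volume.restrict (Ioi (0 : ℝ)))
    (F := tricomiKernel a b) (F' := fun y t => -a * tricomiKernel (a + 1) (b + 1) y t)
    (bound := fun t => |a| * (tricomiKernel (a + 1) (b + 1) (z / 2) t +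
      tricomiKernel (a + 1) (b + 1) (2 * z) t))
    (s := Ioo (z / 2) (2 * z)) (Ioo_mem_nhds (by linarith) (by linarith))
    (Eventually.of_forall fun y => (measurable_tricomiKernel a b y).aestronglyMeasurable)
    (integrableOn_tricomiKernel hab hz)
    ((measurable_tricomiKernel _ _ z).const_mul _).aestronglyMeasurable ?_
    (((hint _ (by positivity)).add (hint _ (by positivity))).const_mul _) ?_
  · refine (hderiv.2.const_mul (1 / Real.Gamma (a - b + 1))).congr_deriv ?_
    rw [integral_const_mul, tricomiU, add_sub_add_right_eq_sub]
    ring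
  · filter_upwards [ae_restrict_mem measurableSet_Ioi] with t (ht : 0 < t) y hy
    have hy₀ : 0 < y := by linarith [hy.1]
    rw [norm_mul, norm_neg, Real.norm_eq_abs a,
      Real.norm_of_nonneg (tricomiKernel_nonneg hy₀.le ht)]
    exact mul_le_mul_of_nonneg_left
      (tricomiKernel_le_add (by positivity) hy.1.le hy.2.le ht) (abs_nonneg a)
  · filter_upwards [ae_restrict_mem measurableSet_Ioi] with t (ht : 0 < t) y hy
    exact hasDerivAt_tricomiKernel (by linarith [hy.1])

lemma hasDerivAt_tricomiU_raising (hab : b < a + 1) (hz : 0 < z) :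
    HasDerivAt (tricomiU a b)
      ((a * (a - b + 1) * tricomiU (a + 1) b z - a * tricomiU a b z) / z) z := by
  refine (hasDerivAt_tricomiU hab hz).congr_deriv ?_
  rw [tricomiU_eq_add hab hz]
  field_simp
  ring

lemma hasDerivAt_tricomiU_lowering (hab : b < a) (hz : 0 < z) :
    HasDerivAt (tricomiU a b)
      (((a - b + z) * tricomiU a b z - tricomiU (a - 1) b z) / z) z := by
  have hpred : tricomiU (a - 1) b z = z * tricomiU a (b + 1) z + (a - b) * tricomiU a b z := by
    simpa only [sub_add_cancel, sub_right_comm a 1 b] using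
      tricomiU_eq_add (a := a - 1) (b := b) (by linarith) hz
  refine (hasDerivAt_tricomiU (by linarith) hz).congr_deriv ?_
  rw [eq_div_iff hz.ne', hpred]
  linear_combination (-z) * tricomiU_eq_sub hab hz

/-- The raising relation for `U(a - 1, b, ·)`, continued to `a - b ≤ 0`. -/
lemma hasDerivAt_tricomiUPred (hab : b < a + 1) (hz : 0 < z) :
    HasDerivAt (tricomiUPred a b)
      (((a - 1) * (a - b) * tricomiU a b z - (a - 1) * tricomiUPred a b z) / z) z := by
  have hU := hasDerivAt_tricomiU_raising hab hz
  have hsucc := hasDerivAt_tricomiU_lowering (a := a + 1) hab hz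
  refine ((((hasDerivAt_id' z).const_add (2 * a - b)).mul hU).sub
    (hsucc.const_mul (a * (a - b + 1)))).congr_deriv ?_
  simp only [tricomiUPred, add_sub_cancel_right]
  field_simp
  ring

end Contiguity

lemma tricomiU_zero {a b : ℝ} (hb : b < 1) :
    tricomiU a b 0 = Real.Gamma (1 - b) / Real.Gamma (a - b + 1) := by
  have hkernel : ∫ t in Ioi (0 : ℝ), tricomiKernel a b 0 t = Real.Gamma (1 - b) := by
    rw [Real.Gamma_eq_integral (by linarith)]
    refine setIntegral_congr_fun measurableSet_Ioi fun t (ht : 0 < t) => ?_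
    simp only [tricomiKernel, zero_add, mul_assoc, ← Real.rpow_add ht]
    ring_nf
  rw [tricomiU, hkernel, one_div_mul_eq_div]

lemma tricomiU_sub_one_zero {a b : ℝ} (hb : b < 1) (hab : a ≠ b) :
    tricomiU (a - 1) b 0 = (a - b) * tricomiU a b 0 := by
  have hne : a - b ≠ 0 := sub_ne_zero.mpr hab
  rw [tricomiU_zero hb, tricomiU_zero hb, Real.Gamma_add_one hne, sub_right_comm, sub_add_cancel]
  field_simp

section Kummer

/-- If the double integral diverges, both iterated Bochner integrals are `0`. -/
lemma integral_integral_swap_of_nonneg {α β : Type*} [MeasurableSpace α] [MeasurableSpace β]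
    {μ : Measure α} {ν : Measure β} [SFinite μ] [SFinite ν] {f : α → β → ℝ}
    (hf : AEStronglyMeasurable (Function.uncurry f) (μ.prod ν))
    (hf₀ : ∀ᵐ p ∂μ.prod ν, 0 ≤ Function.uncurry f p)
    (hleft : ∀ᵐ x ∂μ, Integrable (f x) ν) (hright : ∀ᵐ y ∂ν, Integrable (fun x => f x y) μ) :
    ∫ x, ∫ y, f x y ∂ν ∂μ = ∫ y, ∫ x, f x y ∂μ ∂ν := by
  by_cases hint : Integrable (Function.uncurry f) (μ.prod ν)
  · exact integral_integral_swap hint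
  have hnorm : Function.uncurry f =ᵐ[μ.prod ν] fun p => ‖Function.uncurry f p‖ := by
    filter_upwards [hf₀] with p hp using (Real.norm_of_nonneg hp).symm
  have hnorm_swap := Measure.measurePreserving_swap.quasiMeasurePreserving.ae_eq_comp hnorm
  rw [integral_undef, integral_undef]
  · intro h
    refine hint ((integrable_prod_iff' hf).mpr ⟨hright, h.congr ?_⟩)
    filter_upwards [Measure.ae_ae_of_ae_prod hnorm_swap] with y hy using integral_congr_ae hy
  · intro h
    refine hint ((integrable_prod_iff hf).mpr ⟨hleft, h.congr ?_⟩)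
    filter_upwards [Measure.ae_ae_of_ae_prod hnorm] with x hx using integral_congr_ae hx

/-- The two-variable integrand behind Kummer's transformation: integrating out `t` leaves a
multiple of the Laplace integrand of `U(a, b, z)`, integrating out `ξ` one of `tricomiKernel`. -/
def kummerKernel (a b z ξ t : ℝ) : ℝ :=
  Real.exp (-(z * ξ)) * ξ ^ (a - 1) * (t ^ (a - b) * Real.exp (-((1 + ξ) * t)))

variable {a b z ξ t : ℝ}

lemma kummerKernel_eq (a b z ξ t : ℝ) :
    kummerKernel a b z ξ t =
      Real.exp (-t) * t ^ (a - b) * (ξ ^ (a - 1) * Real.exp (-((z + t) * ξ))) := by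
  have hexp : Real.exp (-(z * ξ)) * Real.exp (-((1 + ξ) * t)) =
      Real.exp (-t) * Real.exp (-((z + t) * ξ)) := by
    rw [← Real.exp_add, ← Real.exp_add]
    ring_nf
  unfold kummerKernel
  linear_combination (ξ ^ (a - 1) * t ^ (a - b)) * hexp

lemma kummerKernel_nonneg (hξ : 0 < ξ) (ht : 0 < t) : 0 ≤ kummerKernel a b z ξ t := by
  unfold kummerKernel
  positivity

lemma integrableOn_rpow_mul_exp_neg_mul {s r : ℝ} (hs : -1 < s) (hr : 0 < r) :
    IntegrableOn (fun t : ℝ => t ^ s * Real.exp (-(r * t))) (Ioi 0) := by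
  simpa using integrableOn_rpow_mul_exp_neg_mul_rpow hs one_pos hr

lemma integrableOn_kummerKernel_right (hab : b < a + 1) (hξ : 0 < ξ) :
    IntegrableOn (fun t => kummerKernel a b z ξ t) (Ioi 0) :=
  (integrableOn_rpow_mul_exp_neg_mul (by linarith) (by positivity)).const_mul _

lemma integrableOn_kummerKernel_left (ha : 0 < a) (hz : 0 ≤ z) (ht : 0 < t) :
    IntegrableOn (fun ξ => kummerKernel a b z ξ t) (Ioi 0) := by
  simp only [kummerKernel_eq]
  exact (integrableOn_rpow_mul_exp_neg_mul (by linarith) (by positivity)).const_mul _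

lemma integral_kummerKernel_right (hab : b < a + 1) (hξ : 0 < ξ) :
    ∫ t in Ioi (0 : ℝ), kummerKernel a b z ξ t = Real.Gamma (a - b + 1) *
      (Real.exp (-(z * ξ)) * ξ ^ (a - 1) * (1 + ξ) ^ (b - a - 1)) := by
  have hlaplace := Real.integral_rpow_mul_exp_neg_mul_Ioi (a := a - b + 1) (r := 1 + ξ)
    (by linarith) (by positivity)
  rw [add_sub_cancel_right, one_div, Real.inv_rpow (by positivity),
    ← Real.rpow_neg (by positivity)] at hlaplace
  simp only [kummerKernel]
  rw [integral_const_mul, hlaplace]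
  ring_nf

lemma integral_kummerKernel_left (ha : 0 < a) (hz : 0 ≤ z) (ht : 0 < t) :
    ∫ ξ in Ioi (0 : ℝ), kummerKernel a b z ξ t = Real.Gamma a * tricomiKernel a b z t := by
  simp only [kummerKernel_eq]
  rw [integral_const_mul, Real.integral_rpow_mul_exp_neg_mul_Ioi ha (by positivity), one_div,
    Real.inv_rpow (by positivity), ← Real.rpow_neg (by positivity), tricomiKernel]
  ring

lemma integral_integral_kummerKernel_swap (ha : 0 < a) (hab : b < a + 1) (hz : 0 ≤ z) :
    ∫ ξ in Ioi (0 : ℝ), ∫ t in Ioi (0 : ℝ), kummerKernel a b z ξ t =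
      ∫ t in Ioi (0 : ℝ), ∫ ξ in Ioi (0 : ℝ), kummerKernel a b z ξ t := by
  refine integral_integral_swap_of_nonneg ?_ ?_ ?_ ?_
  · unfold Function.uncurry kummerKernel
    exact Measurable.aestronglyMeasurable (by fun_prop)
  · rw [Measure.prod_restrict]
    filter_upwards [ae_restrict_mem (measurableSet_Ioi.prod measurableSet_Ioi)] with p hp
    exact kummerKernel_nonneg hp.1 hp.2
  · filter_upwards [ae_restrict_mem measurableSet_Ioi] with ξ hξ
    exact integrableOn_kummerKernel_right hab hξ
  · filter_upwards [ae_restrict_mem measurableSet_Ioi] with t ht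
    exact integrableOn_kummerKernel_left ha hz ht

lemma tricomiU_eq_laplace (ha : 0 < a) (hab : b < a + 1) (hz : 0 ≤ z) :
    tricomiU a b z = 1 / Real.Gamma a *
      ∫ ξ in Ioi (0 : ℝ), Real.exp (-(z * ξ)) * ξ ^ (a - 1) * (1 + ξ) ^ (b - a - 1) := by
  have hΓa : Real.Gamma a ≠ 0 := (Real.Gamma_pos_of_pos ha).ne'
  have hΓc : Real.Gamma (a - b + 1) ≠ 0 := (Real.Gamma_pos_of_pos (by linarith)).ne'
  have hswap := integral_integral_kummerKernel_swap ha hab hz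
  rw [setIntegral_congr_fun measurableSet_Ioi fun ξ hξ => integral_kummerKernel_right hab hξ,
    setIntegral_congr_fun measurableSet_Ioi fun t ht => integral_kummerKernel_left ha hz ht,
    integral_const_mul, integral_const_mul] at hswap
  rw [tricomiU]
  field_simp
  linear_combination -hswap

end Kummer

section SelfSimilar

variable {a b r w x d : ℝ}

lemma hasDerivAt_rpow_mul_comp_div {G : ℝ → ℝ} (hx : 0 < x) (hG : HasDerivAt G d (w / x)) :
    HasDerivAt (fun s => s ^ r * G (w / s)) (x ^ (r - 1) * (r * G (w / x) - w / x * d)) x := by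
  have hpow := Real.hasDerivAt_rpow_const (p := r) (Or.inl hx.ne')
  have hdiv : HasDerivAt (fun s : ℝ => w / s) (-w / x ^ 2) x := by
    simpa using (hasDerivAt_const x w).fun_div (hasDerivAt_id' x) hx.ne'
  refine (hpow.mul (hG.comp x hdiv)).congr_deriv ?_
  rw [Real.rpow_sub_one hx.ne', Function.comp_apply]
  field_simp
  ring

lemma hasDerivAt_rpow_mul_tricomiU (hab : b < a + 1) (hw : 0 < w) (hx : 0 < x) :
    HasDerivAt (fun s => s ^ (-a) * tricomiU a b (w / s))
      (-(a * (a - b + 1)) * (x ^ (-a - 1) * tricomiU (a + 1) b (w / x))) x := by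
  have hz : 0 < w / x := by positivity
  refine (hasDerivAt_rpow_mul_comp_div hx (hasDerivAt_tricomiU_raising hab hz)).congr_deriv ?_
  rw [mul_div_cancel₀ _ hz.ne']
  ring

lemma hasDerivAt_rpow_mul_tricomiUPred (hab : b < a + 1) (hw : 0 < w) (hx : 0 < x) :
    HasDerivAt (fun s => s ^ (1 - a) * tricomiUPred a b (w / s))
      (-((a - 1) * (a - b)) * (x ^ (-a) * tricomiU a b (w / x))) x := by
  have hz : 0 < w / x := by positivity
  refine (hasDerivAt_rpow_mul_comp_div hx (hasDerivAt_tricomiUPred hab hz)).congr_deriv ?_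
  rw [mul_div_cancel₀ _ hz.ne', sub_sub_cancel_left]
  ring

/-- For `w = 0` the value at `0` is all that enters: `tricomiU a b` need not be differentiable
there. -/
lemma hasDerivAt_rpow_mul_exp_mul_tricomiU (hb : b < 1) (hab : b < a) (hw : 0 ≤ w)
    (hx : 0 < x) :
    HasDerivAt (fun s => s ^ (a - b) * (Real.exp (-(w / s)) * tricomiU a b (w / s)))
      (x ^ (a - b - 1) * (Real.exp (-(w / x)) * tricomiU (a - 1) b (w / x))) x := by
  rcases hw.eq_or_lt with rfl | hw
  · simp only [zero_div, neg_zero, Real.exp_zero, one_mul, tricomiU_sub_one_zero hb hab.ne']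
    refine ((Real.hasDerivAt_rpow_const (Or.inl hx.ne')).mul_const _).congr_deriv ?_
    ring
  · have hz : 0 < w / x := by positivity
    have hexp := (hasDerivAt_neg (w / x)).exp
    refine (hasDerivAt_rpow_mul_comp_div hx
      (hexp.mul (hasDerivAt_tricomiU_lowering hab hz))).congr_deriv ?_
    simp only [Pi.mul_apply]
    field_simp
    ring

end SelfSimilar

section Profiles

variable {x v z : ℝ}

lemma U1_eq_tricomiU (hz : 0 ≤ z) : U1 z = tricomiU (5 / 6) (2 / 3) z := by
  rw [tricomiU_eq_laplace (by norm_num) (by norm_num) hz, U1]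
  norm_num

lemma U2_eq_tricomiU (z : ℝ) : U2 z = tricomiU (-1 / 6) (2 / 3) z := by
  simp only [U2, tricomiU, tricomiKernel]
  norm_num

lemma U3_eq_tricomiU (hz : 0 ≤ z) : U3 z = tricomiU (11 / 6) (2 / 3) z := by
  rw [tricomiU_eq_laplace (by norm_num) (by norm_num) hz, U3]
  norm_num

lemma U4_eq_tricomiUPred (hz : 0 ≤ z) : U4 z = tricomiUPred (-1 / 6) (2 / 3) z := by
  rw [U4, U1_eq_tricomiU hz, U2_eq_tricomiU, tricomiUPred,
    show (-1 / 6 + 1 : ℝ) = 5 / 6 by norm_num]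
  ring

lemma Gamma_seven_sixths : Real.Gamma (7 / 6) = 1 / 6 * Real.Gamma (1 / 6) := by
  rw [← Real.Gamma_add_one (by norm_num)]
  norm_num

lemma Gamma_thirteen_sixths : Real.Gamma (13 / 6) = 7 / 36 * Real.Gamma (1 / 6) := by
  rw [show (13 / 6 : ℝ) = 7 / 6 + 1 by norm_num, Real.Gamma_add_one (by norm_num),
    Gamma_seven_sixths]
  ring

lemma neg_cube_pos_of_neg (hv : v < 0) : 0 < -v ^ 3 :=
  neg_pos.mpr (Odd.pow_neg (by decide) hv)

lemma phi0_of_neg (hv : v < 0) :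
    phi0 x v = x ^ (1 / 6 : ℝ) * tricomiU (-1 / 6) (2 / 3) (-v ^ 3 / 9 / x) := by
  rw [phi0, if_pos hv, U2_eq_tricomiU, div_div]

lemma phim1_of_neg (hx : 0 < x) (hv : v < 0) :
    phim1 x v = x ^ (-5 / 6 : ℝ) * tricomiU (5 / 6) (2 / 3) (-v ^ 3 / 9 / x) := by
  have hw := neg_cube_pos_of_neg hv
  rw [phim1, if_pos hv, U1_eq_tricomiU (by positivity), div_div]

lemma phi1_of_neg (hx : 0 < x) (hv : v < 0) :
    phi1 x v = -(x ^ (7 / 6 : ℝ) * tricomiUPred (-1 / 6) (2 / 3) (-v ^ 3 / 9 / x)) := by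
  have hw := neg_cube_pos_of_neg hv
  rw [phi1, if_pos hv, U4_eq_tricomiUPred (by positivity), div_div]

lemma phi0_of_nonneg (hx : 0 < x) (hv : 0 ≤ v) :
    phi0 x v = 1 / 6 * (x ^ (1 / 6 : ℝ) *
      (Real.exp (-(v ^ 3 / 9 / x)) * tricomiU (5 / 6) (2 / 3) (v ^ 3 / 9 / x))) := by
  have hΓ : Real.Gamma (1 / 6) ≠ 0 := (Real.Gamma_pos_of_pos (by norm_num)).ne'
  rw [phi0, if_neg hv.not_gt, U1_eq_tricomiU (by positivity), Gamma_seven_sixths, div_div,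
    neg_div]
  field_simp

lemma phim1_of_nonneg (hv : 0 ≤ v) :
    phim1 x v = 6 * (x ^ (-5 / 6 : ℝ) *
      (Real.exp (-(v ^ 3 / 9 / x)) * tricomiU (-1 / 6) (2 / 3) (v ^ 3 / 9 / x))) := by
  have hΓ : Real.Gamma (1 / 6) ≠ 0 := (Real.Gamma_pos_of_pos (by norm_num)).ne'
  rw [phim1, if_neg hv.not_gt, U2_eq_tricomiU, Gamma_seven_sixths, div_div, neg_div (9 * x)]
  field_simp

lemma phi1_of_nonneg (hx : 0 < x) (hv : 0 ≤ v) :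
    phi1 x v = 35 / 216 * (x ^ (7 / 6 : ℝ) *
      (Real.exp (-(v ^ 3 / 9 / x)) * tricomiU (11 / 6) (2 / 3) (v ^ 3 / 9 / x))) := by
  have hΓ : Real.Gamma (1 / 6) ≠ 0 := (Real.Gamma_pos_of_pos (by norm_num)).ne'
  rw [phi1, if_neg hv.not_gt, U3_eq_tricomiU (by positivity), Gamma_thirteen_sixths, div_div,
    neg_div (9 * x)]
  field_simp
  ring

lemma hasDerivAt_phi0_of_neg (hx : 0 < x) (hv : v < 0) :
    HasDerivAt (fun s => phi0 s v) (1 / 36 * phim1 x v) x := by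
  have hw := neg_cube_pos_of_neg hv
  have hderiv := hasDerivAt_rpow_mul_tricomiU (a := -1 / 6) (b := 2 / 3) (w := -v ^ 3 / 9)
    (by norm_num) (by positivity) hx
  rw [show -(-1 / 6 : ℝ) = 1 / 6 by norm_num, show (1 / 6 - 1 : ℝ) = -5 / 6 by norm_num,
    show (-1 / 6 + 1 : ℝ) = 5 / 6 by norm_num] at hderiv
  simp only [phi0_of_neg hv, phim1_of_neg hx hv]
  exact hderiv.congr_deriv (by ring)

lemma hasDerivAt_phi0_of_nonneg (hx : 0 < x) (hv : 0 ≤ v) :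
    HasDerivAt (fun s => phi0 s v) (1 / 36 * phim1 x v) x := by
  have hphi0 : (fun s => phi0 s v) =ᶠ[nhds x] _ :=
    (eventually_gt_nhds hx).mono fun s hs => phi0_of_nonneg hs hv
  have hderiv := hasDerivAt_rpow_mul_exp_mul_tricomiU (a := 5 / 6) (b := 2 / 3)
    (w := v ^ 3 / 9) (by norm_num) (by norm_num) (by positivity) hx
  rw [show (5 / 6 - 2 / 3 : ℝ) = 1 / 6 by norm_num, show (1 / 6 - 1 : ℝ) = -5 / 6 by norm_num,
    show (5 / 6 - 1 : ℝ) = -1 / 6 by norm_num] at hderiv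
  rw [phim1_of_nonneg hv]
  exact ((hderiv.const_mul (1 / 6)).congr_of_eventuallyEq hphi0).congr_deriv (by ring)

lemma hasDerivAt_phi1_of_neg (hx : 0 < x) (hv : v < 0) :
    HasDerivAt (fun s => phi1 s v) (35 / 36 * phi0 x v) x := by
  have hw := neg_cube_pos_of_neg hv
  have hphi1 : (fun s => phi1 s v) =ᶠ[nhds x] _ :=
    (eventually_gt_nhds hx).mono fun s hs => phi1_of_neg hs hv
  have hderiv := hasDerivAt_rpow_mul_tricomiUPred (a := -1 / 6) (b := 2 / 3) (w := -v ^ 3 / 9)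
    (by norm_num) (by positivity) hx
  rw [show (1 - -1 / 6 : ℝ) = 7 / 6 by norm_num,
    show -(-1 / 6 : ℝ) = 1 / 6 by norm_num] at hderiv
  rw [phi0_of_neg hv]
  exact (hderiv.fun_neg.congr_of_eventuallyEq hphi1).congr_deriv (by ring)

lemma hasDerivAt_phi1_of_nonneg (hx : 0 < x) (hv : 0 ≤ v) :
    HasDerivAt (fun s => phi1 s v) (35 / 36 * phi0 x v) x := by
  have hphi1 : (fun s => phi1 s v) =ᶠ[nhds x] _ :=
    (eventually_gt_nhds hx).mono fun s hs => phi1_of_nonneg hs hv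
  have hderiv := hasDerivAt_rpow_mul_exp_mul_tricomiU (a := 11 / 6) (b := 2 / 3)
    (w := v ^ 3 / 9) (by norm_num) (by norm_num) (by positivity) hx
  rw [show (11 / 6 - 2 / 3 : ℝ) = 7 / 6 by norm_num, show (7 / 6 - 1 : ℝ) = 1 / 6 by norm_num,
    show (11 / 6 - 1 : ℝ) = 5 / 6 by norm_num] at hderiv
  rw [phi0_of_nonneg hx hv]
  exact ((hderiv.const_mul (35 / 216)).congr_of_eventuallyEq hphi1).congr_deriv (by ring)

end Profiles

theorem statement_18 (x v : ℝ) (hx : 0 < x) :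
    HasDerivAt (fun s => phi0 s v) ((1/36) * phim1 x v) x ∧
    HasDerivAt (fun s => phi1 s v) ((35/36) * phi0 x v) x := by
  rcases lt_or_ge v 0 with hv | hv
  · exact ⟨hasDerivAt_phi0_of_neg hx hv, hasDerivAt_phi1_of_neg hx hv⟩
  · exact ⟨hasDerivAt_phi0_of_nonneg hx hv, hasDerivAt_phi1_of_nonneg hx hv⟩
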